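/- Under the 2-group SBM with observation errors, suppose q ∈ (0,1), β ∈ (0,1), and restrict to the event Y ≠ Y*. Then there exists a strictly positive definite 3×3 covariance matrix Σ_β such that the vector (n(β̂_b − β), √n(γ̂_1 − γ_1), √n(γ̂_2 − γ_2)) converges in distribution to the centered 3-dimensional Gaussian N(0, Σ_β) as n → ∞. -/

import Mathlib

/-!
STATEMENT 13: Under the 2-group SBM with observation errors, restricted to the
event Y ≠ Y* (formalized via the conditional probability measure given that
event), there is a strictly positive definite 3×3 covariance Σ_β such that
(n(β̂_b − β), √n(γ̂₁ − γ₁), √n(γ̂₂ − γ₂)) converges in distribution to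
N(0, Σ_β).  Convergence in distribution to the multivariate Gaussian is
expressed by the Cramér–Wold device.  The model hypothesis holds for all
large n.
-/

open MeasureTheory ProbabilityTheory Filter Finset

noncomputable section

/-- Mass of a label configuration: i.i.d. labels, `true` (minority) w.p. κ. -/
def labelMass (κ : ℝ) {n : ℕ} (l : Fin n → Bool) : ℝ :=
  ∏ i, (if l i then κ else 1 - κ)

/-- Conditional mass of an adjacency configuration given labels:
independent Bernoulli edges with success probability `B (l i) (l j)`, i < j. -/
def edgeMass {n : ℕ} (B : Bool → Bool → ℝ) (l : Fin n → Bool)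
    (a : Fin n → Fin n → Bool) : ℝ :=
  ∏ p ∈ Finset.univ.filter (fun p : Fin n × Fin n => p.1 < p.2),
    (if a p.1 p.2 then B (l p.1) (l p.2) else 1 - B (l p.1) (l p.2))

/-- Conditional mass of an observed network `y` given the construct network
`a` and the labels: each present edge of `a` is kept independently with
probability `1 − βm (l i) (l j)` (type II error rate `βm`), and no edges are
added. -/
def obsMass {n : ℕ} (βm : Bool → Bool → ℝ) (l : Fin n → Bool)
    (a y : Fin n → Fin n → Bool) : ℝ :=
  ∏ p ∈ Finset.univ.filter (fun p : Fin n × Fin n => p.1 < p.2),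
    (if a p.1 p.2 then
      (if y p.1 p.2 then 1 - βm (l p.1) (l p.2) else βm (l p.1) (l p.2))
     else (if y p.1 p.2 then 0 else 1))

/-- The symmetric 2×2 matrix with within-group values `x₁` (group 1 = `true`),
`x₂` (group 2 = `false`) and between-group value `xb`. -/
def sbmB (x₁ x₂ xb : ℝ) : Bool → Bool → ℝ :=
  fun x y => if x then (if y then x₁ else xb) else (if y then xb else x₂)

/-- `(P, c, A, Y, Y')` is a 2-group SBM with connectivity matrix `B` and two
conditionally independent noisy replicates `Y`, `Y'` with group-dependent
type II error rates `βm`.  The joint law is specified by its probability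
mass function. -/
structure IsObsSBM {Ω : Type*} [MeasurableSpace Ω] (P : Measure Ω) (n : ℕ)
    (B βm : Bool → Bool → ℝ) (κ : ℝ)
    (c : Ω → Fin n → Bool) (A Y Y' : Ω → Fin n → Fin n → Bool) : Prop where
  isProb : IsProbabilityMeasure P
  symmA : ∀ ω i j, A ω i j = A ω j i
  looplessA : ∀ ω i, A ω i i = false
  symmY : ∀ ω i j, Y ω i j = Y ω j i
  looplessY : ∀ ω i, Y ω i i = false
  symmY' : ∀ ω i j, Y' ω i j = Y' ω j i
  looplessY' : ∀ ω i, Y' ω i i = false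
  law : ∀ (l : Fin n → Bool) (a y y' : Fin n → Fin n → Bool),
    (∀ i j, a i j = a j i) → (∀ i, a i i = false) →
    (∀ i j, y i j = y j i) → (∀ i, y i i = false) →
    (∀ i j, y' i j = y' j i) → (∀ i, y' i i = false) →
    P {ω | c ω = l ∧ A ω = a ∧ Y ω = y ∧ Y' ω = y'}
      = ENNReal.ofReal (labelMass κ l * edgeMass B l a *
          obsMass βm l a y * obsMass βm l a y')

/-- Number of unordered pairs `i < j` selected by `sel`. -/
def pairCard {n : ℕ} (sel : Fin n → Fin n → Bool) : ℝ :=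
  ((Finset.univ.filter
      (fun p : Fin n × Fin n => p.1 < p.2 ∧ sel p.1 p.2 = true)).card : ℝ)

/-- Pairs within group 1. -/
def within1 {n : ℕ} (c : Fin n → Bool) : Fin n → Fin n → Bool :=
  fun i j => c i && c j

/-- Pairs within group 2. -/
def within2 {n : ℕ} (c : Fin n → Bool) : Fin n → Fin n → Bool :=
  fun i j => !(c i) && !(c j)

/-- Between-group pairs. -/
def between {n : ℕ} (c : Fin n → Bool) : Fin n → Fin n → Bool :=
  fun i j => c i != c j

/-- `û₁`: observed edge density over the pairs selected by `cls`. -/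
def u1hat {n : ℕ} (cls y : Fin n → Fin n → Bool) : ℝ :=
  pairCard (fun i j => cls i j && y i j) / pairCard cls

/-- `û₂`: half the disagreement rate of the two replicates over the pairs
selected by `cls`. -/
def u2hat {n : ℕ} (cls y y' : Fin n → Fin n → Bool) : ℝ :=
  pairCard (fun i j => cls i j && (y i j != y' i j)) / (2 * pairCard cls)

/-- Estimator of the type II error rate over the pairs selected by `cls`. -/
def betaHat {n : ℕ} (cls y y' : Fin n → Fin n → Bool) : ℝ :=
  u2hat cls y y' / u1hat cls y

/-- `γ̂₁ = √n (β̂_b − β̂₁)`. -/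
def gammaHat1 {n : ℕ} (c : Fin n → Bool) (y y' : Fin n → Fin n → Bool) : ℝ :=
  Real.sqrt n * (betaHat (between c) y y' - betaHat (within1 c) y y')

/-- `γ̂₂ = √n (β̂_b − β̂₂)`. -/
def gammaHat2 {n : ℕ} (c : Fin n → Bool) (y y' : Fin n → Fin n → Bool) : ℝ :=
  Real.sqrt n * (betaHat (between c) y y' - betaHat (within2 c) y y')

/-- `μ̂₁ = √n (û₁,₁/(1−β̂₁) − û₁,b/(1−β̂_b))`. -/
def muHat1 {n : ℕ} (c : Fin n → Bool) (y y' : Fin n → Fin n → Bool) : ℝ :=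
  Real.sqrt n * (u1hat (within1 c) y / (1 - betaHat (within1 c) y y')
    - u1hat (between c) y / (1 - betaHat (between c) y y'))

/-- `μ̂₂ = √n (û₁,₂/(1−β̂₂) − û₁,b/(1−β̂_b))`. -/
def muHat2 {n : ℕ} (c : Fin n → Bool) (y y' : Fin n → Fin n → Bool) : ℝ :=
  Real.sqrt n * (u1hat (within2 c) y / (1 - betaHat (within2 c) y y')
    - u1hat (between c) y / (1 - betaHat (between c) y y'))

/-- Quadratic form of a 3×3 matrix. -/
def quadForm3 (M : Matrix (Fin 3) (Fin 3) ℝ) (t : Fin 3 → ℝ) : ℝ :=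
  ∑ k, ∑ k', t k * M k k' * t k'

/-!
Given the labels, the dyads are independent, so the vector of normalised block sums has a
conditional characteristic function that is an explicit product over the three blocks, and it
depends on the labels only through the proportion of nodes in group 1. Averaging over the labels
is then evaluation of a Bernstein approximation at `κ`, so the limit is obtained by setting this
proportion to `κ`. By Slutsky's theorem for the ratios of block sums, the errors `n (β̂ₓ - βₓ)` of
the three blocks converge jointly to independent centred Gaussians. The target vector is an
invertible linear image of these errors, and conditioning on `Y ≠ Y'`, an event of probability
tending to 1, does not affect the limit.
-/

open scoped Topology unitInterval Matrix

lemma tendsto_sq_mul_exp_div_sub_one_sub {y : ℕ → ℂ} {y₀ : ℂ} (hy : Tendsto y atTop (𝓝 y₀)) :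
    Tendsto (fun n : ℕ => (n : ℂ) ^ 2 * (Complex.exp (y n / n) - 1 - y n / n)) atTop
      (𝓝 (y₀ ^ 2 / 2)) := by
  have hinv : Tendsto (fun n : ℕ => ((n : ℂ))⁻¹) atTop (𝓝 0) := tendsto_inv_atTop_nhds_zero_nat
  have hdiv : Tendsto (fun n : ℕ => y n / n) atTop (𝓝 0) := by
    simpa only [div_eq_mul_inv, mul_zero] using hy.mul hinv
  have hexp := (Real.continuous_exp.tendsto _).comp hdiv.norm
  have hbound : Tendsto (fun n : ℕ => ‖y n‖ ^ 2 * ‖y n / n‖ * Real.exp ‖y n / n‖) atTop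
      (𝓝 0) := by
    simpa using ((hy.norm.pow 2).mul hdiv.norm).mul hexp
  have hrem : Tendsto (fun n : ℕ => (n : ℂ) ^ 2 *
      (Complex.exp (y n / n) - ∑ j ∈ range 3, (y n / n) ^ j / j.factorial)) atTop (𝓝 0) := by
    refine squeeze_zero_norm' ?_ hbound
    filter_upwards [eventually_ne_atTop 0] with n hn
    have hn' : (n : ℝ) ≠ 0 := Nat.cast_ne_zero.2 hn
    calc _ ≤ (n : ℝ) ^ 2 * (‖y n / n‖ ^ 3 * Real.exp ‖y n / n‖) := by
          rw [norm_mul, norm_pow, Complex.norm_natCast]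
          gcongr
          exact Complex.norm_exp_sub_sum_le_norm_mul_exp _ 3
      _ = _ := by
          rw [norm_div, Complex.norm_natCast]
          field_simp
  have hlim := hrem.add ((hy.pow 2).div_const 2)
  rw [zero_add] at hlim
  refine hlim.congr' ?_
  filter_upwards [eventually_ne_atTop 0] with n hn
  have hn' : (n : ℂ) ≠ 0 := Nat.cast_ne_zero.2 hn
  simp only [sum_range_succ, range_zero, sum_empty, Nat.factorial]
  push_cast
  field_simp
  ring

lemma tendsto_sq_mul_sum_mul_cexp_sub_one {α : Type*} [Fintype α] {p s : ℕ → α → ℝ} {p₀ s₀ : α → ℝ}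
    (m : α → ℝ) (hsum : ∀ n, ∑ w, p n w = 1) (hmean : ∀ n, ∑ w, p n w * s n w = 0)
    (hp : Tendsto p atTop (𝓝 p₀)) (hs : Tendsto s atTop (𝓝 s₀)) :
    Tendsto (fun n : ℕ => (n : ℂ) ^ 2 *
        (∑ w, p n w * Complex.exp ((s n w / n + m w / n ^ 2 : ℝ) * Complex.I) - 1)) atTop
      (𝓝 (∑ w, p₀ w * (m w * Complex.I - s₀ w ^ 2 / 2))) := by
  have hpc : ∀ w, Tendsto (fun n => (p n w : ℂ)) atTop (𝓝 (p₀ w)) := fun w =>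
    (Complex.continuous_ofReal.tendsto _).comp (tendsto_pi_nhds.1 hp w)
  have hy : ∀ w, Tendsto (fun n : ℕ => (s n w + m w * (n : ℂ)⁻¹) * Complex.I) atTop
      (𝓝 (s₀ w * Complex.I)) := fun w => by
    simpa using ((Complex.continuous_ofReal.tendsto _ |>.comp (tendsto_pi_nhds.1 hs w)).add
      (tendsto_inv_atTop_nhds_zero_nat.const_mul (m w : ℂ))).mul_const Complex.I
  have hlim := tendsto_finsetSum univ fun w _ =>
    (hpc w).mul ((tendsto_sq_mul_exp_div_sub_one_sub (hy w)).add_const (m w * Complex.I))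
  have hval : ∑ w, (p₀ w : ℂ) * ((s₀ w * Complex.I) ^ 2 / 2 + m w * Complex.I) =
      ∑ w, p₀ w * (m w * Complex.I - s₀ w ^ 2 / 2) := by
    refine sum_congr rfl fun w _ => ?_
    rw [mul_pow, Complex.I_sq]
    ring
  rw [hval] at hlim
  refine hlim.congr' ?_
  filter_upwards [eventually_ne_atTop 0] with n hn
  have hn' : (n : ℂ) ≠ 0 := Nat.cast_ne_zero.2 hn
  have hsum' : ∑ w, (p n w : ℂ) = 1 := by exact_mod_cast hsum n
  have hmean' : ∑ w, (p n w : ℂ) * s n w = 0 := by exact_mod_cast hmean n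
  have hexp : ∀ w, ((s n w + m w * (n : ℂ)⁻¹) * Complex.I) / n =
      (s n w / n + m w / n ^ 2 : ℝ) * Complex.I := fun w => by
    push_cast
    field_simp
  calc ∑ w, (p n w : ℂ) * ((n : ℂ) ^ 2 * (Complex.exp (((s n w + m w * (n : ℂ)⁻¹) * Complex.I) / n)
          - 1 - ((s n w + m w * (n : ℂ)⁻¹) * Complex.I) / n) + m w * Complex.I)
      = ∑ w, ((n : ℂ) ^ 2 * (p n w * Complex.exp ((s n w / n + m w / n ^ 2 : ℝ) * Complex.I))
          - (n : ℂ) ^ 2 * p n w - n * Complex.I * (p n w * s n w)) := by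
        refine sum_congr rfl fun w _ => ?_
        rw [hexp]
        push_cast
        field_simp
        ring
    _ = _ := by
        rw [sum_sub_distrib, sum_sub_distrib, ← mul_sum, ← mul_sum, ← mul_sum, hsum', hmean']
        ring

lemma tendsto_zero_of_tendsto_mul {ι : Type*} {l : Filter ι} {N x : ι → ℂ} {θ : ℂ}
    (hN : Tendsto (fun n => ‖N n‖) l atTop) (h : Tendsto (fun n => N n * x n) l (𝓝 θ)) :
    Tendsto x l (𝓝 0) := by
  have hinv : Tendsto (fun n => (N n)⁻¹) l (𝓝 0) :=
    tendsto_inv₀_cobounded.comp (tendsto_norm_atTop_iff_cobounded.1 hN)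
  have hmul := hinv.mul h
  rw [zero_mul] at hmul
  refine hmul.congr' ?_
  filter_upwards [hN.eventually_gt_atTop 0] with n hn
  exact inv_mul_cancel_left₀ (norm_pos_iff.1 hn) _

lemma tendsto_mul_log_of_tendsto_mul_sub_one {ι : Type*} {l : Filter ι} {N χ : ι → ℂ} {θ : ℂ}
    (hN : Tendsto (fun n => ‖N n‖) l atTop) (h : Tendsto (fun n => N n * (χ n - 1)) l (𝓝 θ)) :
    Tendsto (fun n => N n * Complex.log (χ n)) l (𝓝 θ) := by
  have hlog : HasDerivAt Complex.log 1 1 := by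
    simpa using Complex.hasDerivAt_log Complex.one_mem_slitPlane
  simpa using hlog.hasFDerivAt.hasFDerivWithinAt (s := Set.univ) |>.lim
    (tendsto_zero_of_tendsto_mul hN h) (by simp) h

lemma tendstoInDistribution_id_pi_of_tendsto_charFun {ι : Type*} [Fintype ι] {Ω : ℕ → Type*}
    [∀ n, MeasurableSpace (Ω n)] {μ : ∀ n, Measure (Ω n)} [∀ n, IsProbabilityMeasure (μ n)]
    {X : ∀ n, Ω n → ι → ℝ} (hX : ∀ n, AEMeasurable (X n) (μ n))
    {ν : ι → Measure ℝ} [∀ i, IsProbabilityMeasure (ν i)]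
    (h : ∀ u : ι → ℝ, Tendsto (fun n =>
      ∫ ω, Complex.exp ((∑ i, u i * X n ω i : ℝ) * Complex.I) ∂μ n) atTop
        (𝓝 (∏ i, charFun (ν i) (u i)))) :
    TendstoInDistribution X atTop id μ (Measure.pi ν) := by
  have htoLp : Measurable (WithLp.toLp 2 : (ι → ℝ) → EuclideanSpace ℝ ι) := by fun_prop
  have hX' : ∀ n, AEMeasurable (fun ω => WithLp.toLp 2 (X n ω)) (μ n) :=
    fun n => htoLp.comp_aemeasurable (hX n)
  have hlp : TendstoInDistribution (fun n ω => WithLp.toLp 2 (X n ω)) atTop (WithLp.toLp 2) μ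
      (Measure.pi ν) := by
    refine ⟨hX', htoLp.aemeasurable, ProbabilityMeasure.tendsto_of_tendsto_charFun fun u => ?_⟩
    simp only [ProbabilityMeasure.coe_mk]
    rw [charFun_pi]
    refine (h u).congr fun n => ?_
    rw [charFun_apply, integral_map (hX' n) (by fun_prop)]
    simp only [PiLp.inner_apply, RCLike.inner_apply, conj_trivial]
  simpa only [Function.comp_def] using! hlp.continuous_comp (PiLp.continuous_ofLp 2 _)

lemma map_sum_mul_pi_gaussianReal {ι : Type*} [Fintype ι] (c m : ι → ℝ) (v : ι → NNReal) :
    (Measure.pi fun i => gaussianReal (m i) (v i)).map (fun z => ∑ i, c i * z i) =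
      gaussianReal (∑ i, c i * m i) (∑ i, .mk (c i ^ 2) (sq_nonneg _) * v i) := by
  have hscale : (Measure.pi fun i => gaussianReal (m i) (v i)).map (fun z i => c i * z i) =
      Measure.pi fun i => gaussianReal (c i * m i) (.mk (c i ^ 2) (sq_nonneg _) * v i) := by
    simp only [← gaussianReal_map_const_mul]
    exact Measure.pi_map_pi fun i => by fun_prop
  have hsum : Measurable fun z : ι → ℝ => ∑ i, z i := by fun_prop
  have hmul : Measurable fun (z : ι → ℝ) i => c i * z i :=
    measurable_pi_lambda _ fun i => (measurable_pi_apply i).const_mul _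
  rw [show (fun z : ι → ℝ => ∑ i, c i * z i) = (fun z => ∑ i, z i) ∘ fun z i => c i * z i from rfl,
    ← Measure.map_map hsum hmul, hscale]
  refine Measure.ext_of_charFun (funext fun t => ?_)
  simp only [charFun_map_sum_pi_eq_prod, Finset.prod_apply, charFun_gaussianReal, ← Complex.exp_sum,
    sum_sub_distrib, ← mul_sum, ← sum_mul, ← sum_div]
  push_cast
  rfl

section Limits

variable {ι : Type*} {l : Filter ι} {Ω : ι → Type*} [∀ n, MeasurableSpace (Ω n)]
  {μ : ∀ n, Measure (Ω n)} [∀ n, IsProbabilityMeasure (μ n)]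

section TendstoInDistribution

variable {E Ω' : Type*} [MeasurableSpace Ω'] {μ' : Measure Ω'} [IsProbabilityMeasure μ']
  [TopologicalSpace E] [MeasurableSpace E] [BorelSpace E]
  {X Y : ∀ n, Ω n → E} {Z : Ω' → E}

lemma tendsto_measureReal_preimage_of_tendstoInDistribution [HasOuterApproxClosed E]
    (h : TendstoInDistribution X l Z μ μ') {s : Set E} (hs : MeasurableSet s)
    (hfr : μ'.map Z (frontier s) = 0) :
    Tendsto (fun n => (μ n).real (X n ⁻¹' s)) l (𝓝 (μ'.real (Z ⁻¹' s))) := by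
  have hlim := ProbabilityMeasure.tendsto_measure_of_null_frontier_of_tendsto' h.tendsto hfr
  simp only [ProbabilityMeasure.coe_mk, Measure.map_apply_of_aemeasurable
    (h.forall_aemeasurable _) hs, Measure.map_apply_of_aemeasurable h.aemeasurable_limit hs] at hlim
  exact (ENNReal.tendsto_toReal (measure_ne_top _ _)).comp hlim

lemma tendstoInDistribution_of_tendsto_measureReal_ne (h : TendstoInDistribution X l Z μ μ')
    (hY : ∀ n, AEMeasurable (Y n) (μ n))
    (hXY : Tendsto (fun n => (μ n).real {ω | X n ω ≠ Y n ω}) l (𝓝 0)) :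
    TendstoInDistribution Y l Z μ μ' := by
  refine ⟨hY, h.aemeasurable_limit, ProbabilityMeasure.tendsto_iff_forall_integral_tendsto.2
    fun f => ?_⟩
  have hX := ProbabilityMeasure.tendsto_iff_forall_integral_tendsto.1 h.tendsto f
  simp only [ProbabilityMeasure.coe_mk] at hX ⊢
  refine hX.congr_dist (squeeze_zero (fun n => dist_nonneg) (fun n => ?_)
    (by simpa using hXY.const_mul (2 * ‖f‖)))
  have hint : ∀ {W : Ω n → E}, AEMeasurable W (μ n) → Integrable (fun ω => f (W ω)) (μ n) :=
    fun hW => .of_bound (f.continuous.measurable.comp_aemeasurable hW).aestronglyMeasurable ‖f‖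
      (ae_of_all _ fun ω => f.norm_coe_le_norm _)
  have hzero : ∀ ω ∉ {ω | X n ω ≠ Y n ω}, f (X n ω) - f (Y n ω) = 0 := fun ω hω => by
    rw [not_not.1 hω, sub_self]
  rw [integral_map (h.forall_aemeasurable n) f.continuous.aestronglyMeasurable,
    integral_map (hY n) f.continuous.aestronglyMeasurable, dist_eq_norm,
    ← integral_sub (hint (h.forall_aemeasurable n)) (hint (hY n)),
    ← setIntegral_eq_integral_of_forall_compl_eq_zero hzero]
  refine norm_setIntegral_le_of_norm_le_const (measure_lt_top _ _) fun ω _ => ?_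
  rw [← dist_eq_norm]
  exact f.dist_le_two_norm _ _

end TendstoInDistribution

lemma tendsto_cond_of_tendsto_measureReal_compl {s t : ∀ n, Set (Ω n)} {a : ℝ}
    (hs : ∀ n, MeasurableSet (s n)) (hsc : Tendsto (fun n => (μ n).real (s n)ᶜ) l (𝓝 0))
    (ht : Tendsto (fun n => (μ n).real (t n)) l (𝓝 a)) :
    Tendsto (fun n => (cond (μ n) (s n)).real (t n)) l (𝓝 a) := by
  have hs1 : Tendsto (fun n => (μ n).real (s n)) l (𝓝 1) := by
    simpa [probReal_compl_eq_one_sub (hs _)] using hsc.const_sub 1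
  have hst : Tendsto (fun n => (μ n).real (s n ∩ t n)) l (𝓝 a) := by
    refine tendsto_of_tendsto_of_tendsto_of_le_of_le (by simpa using ht.sub hsc) ht
      (fun n => ?_) fun n => measureReal_mono Set.inter_subset_right
    rw [sub_le_iff_le_add]
    refine (measureReal_mono fun ω hω => ?_).trans (measureReal_union_le _ _)
    exact (em (ω ∈ s n)).imp (fun h => ⟨h, hω⟩) id
  simpa [measureReal_def, cond_apply (hs _), ENNReal.toReal_mul] using
    (hs1.inv₀ one_ne_zero).mul hst

end Limits

/-- The unordered pairs of nodes, represented by `i < j`. -/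
abbrev Pair (n : ℕ) : Type := {p : Fin n × Fin n // p.1 < p.2}

/-- The state `(Aᵢⱼ, Yᵢⱼ, Y'ᵢⱼ)` of one pair: the true edge and its two noisy replicates. -/
abbrev Dyad : Type := Bool × Bool × Bool

/-- The labels together with the states of all pairs: the finite sample space of the model. -/
abbrev Config (n : ℕ) : Type := (Fin n → Bool) × (Pair n → Dyad)

/-- The block of a pair of labels: `0` between the groups, `1` and `2` within groups 1 and 2. -/
def labelBlock (x y : Bool) : Fin 3 := if x then (if y then 1 else 0) else (if y then 0 else 2)

/-- The block to which the pair `p` belongs under the labelling `l`. -/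
def pairBlock {n : ℕ} (l : Fin n → Bool) (p : Pair n) : Fin 3 := labelBlock (l p.1.1) (l p.1.2)

/-- The probability of a noisy observation `y` of an entry `a` with type II error rate `β`. -/
def replicateMass (β : ℝ) (a y : Bool) : ℝ :=
  if a then (if y then 1 - β else β) else (if y then 0 else 1)

/-- The probability of a dyad whose edge has probability `b` and error rate `β`. -/
def dyadMass (b β : ℝ) (w : Dyad) : ℝ :=
  (if w.1 then b else 1 - b) * replicateMass β w.1 w.2.1 * replicateMass β w.1 w.2.2

/-- The probability of a configuration with label probability `κ` and with edge probabilities `b`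
and error rates `β` indexed by blocks. -/
def configMass (κ : I) (b β : Fin 3 → I) {n : ℕ} (e : Config n) : ℝ :=
  labelMass κ e.1 * ∏ p : Pair n, dyadMass (b (pairBlock e.1 p)) (β (pairBlock e.1 p)) (e.2 p)

section Law

variable {n : ℕ}

lemma labelMass_nonneg (κ : I) (l : Fin n → Bool) : 0 ≤ labelMass κ l :=
  prod_nonneg fun i _ => by
    split_ifs
    exacts [unitInterval.nonneg κ, unitInterval.one_minus_nonneg κ]

lemma sum_labelMass (κ : ℝ) (n : ℕ) : ∑ l : Fin n → Bool, labelMass κ l = 1 := by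
  simp [labelMass, ← Fintype.prod_sum fun (_ : Fin n) (x : Bool) => if x then κ else 1 - κ]

lemma replicateMass_nonneg (β : I) (a y : Bool) : 0 ≤ replicateMass β a y := by
  unfold replicateMass
  split_ifs
  exacts [unitInterval.one_minus_nonneg β, unitInterval.nonneg β, le_rfl, zero_le_one]

lemma dyadMass_nonneg (b β : I) (w : Dyad) : 0 ≤ dyadMass b β w := by
  have hedge : 0 ≤ if w.1 then (b : ℝ) else 1 - b := by
    split_ifs
    exacts [unitInterval.nonneg b, unitInterval.one_minus_nonneg b]
  exact mul_nonneg (mul_nonneg hedge (replicateMass_nonneg _ _ _)) (replicateMass_nonneg _ _ _)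

lemma sum_dyadMass (b β : ℝ) : ∑ w, dyadMass b β w = 1 := by
  simp only [Fintype.sum_prod_type, Fintype.sum_bool, dyadMass, replicateMass, if_true, if_false,
    Bool.false_eq_true]
  ring

lemma configMass_nonneg (κ : I) (b β : Fin 3 → I) (e : Config n) :
    0 ≤ configMass κ b β e :=
  mul_nonneg (labelMass_nonneg κ _) (prod_nonneg fun _ _ => dyadMass_nonneg _ _ _)

lemma sum_configMass_smul_prod {𝕜 : Type*} [RCLike 𝕜] (κ : I) (b β : Fin 3 → I)
    (g : Fin 3 → Dyad → 𝕜) :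
    ∑ e : Config n, configMass κ b β e • ∏ p, g (pairBlock e.1 p) (e.2 p) =
      ∑ l : Fin n → Bool, labelMass κ l •
        ∏ p, ∑ w, dyadMass (b (pairBlock l p)) (β (pairBlock l p)) w • g (pairBlock l p) w := by
  rw [Fintype.sum_prod_type]
  refine sum_congr rfl fun l _ => ?_
  rw [Fintype.prod_sum, smul_sum]
  refine sum_congr rfl fun x _ => ?_
  simp only [configMass, mul_smul, RCLike.real_smul_eq_coe_mul, prod_mul_distrib,
    RCLike.ofReal_prod]

lemma sum_configMass (κ : I) (b β : Fin 3 → I) : ∑ e : Config n, configMass κ b β e = 1 := by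
  simpa [sum_dyadMass, sum_labelMass] using
    sum_configMass_smul_prod (𝕜 := ℝ) (n := n) κ b β fun _ _ => 1

/-- The law of the configuration. -/
def configLaw (κ : I) (b β : Fin 3 → I) (n : ℕ) : PMF (Config n) :=
  PMF.ofFintype (fun e => ENNReal.ofReal (configMass κ b β e)) <| by
    rw [← ENNReal.ofReal_sum_of_nonneg fun e _ => configMass_nonneg κ b β e, sum_configMass,
      ENNReal.ofReal_one]

lemma integral_configLaw_prod {𝕜 : Type*} [RCLike 𝕜] (κ : I) (b β : Fin 3 → I)
    (g : Fin 3 → Dyad → 𝕜) :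
    ∫ e, ∏ p, g (pairBlock e.1 p) (e.2 p) ∂(configLaw κ b β n).toMeasure =
      ∑ l : Fin n → Bool, labelMass κ l •
        ∏ p, ∑ w, dyadMass (b (pairBlock l p)) (β (pairBlock l p)) w • g (pairBlock l p) w := by
  rw [PMF.integral_eq_sum, ← sum_configMass_smul_prod κ b β]
  refine sum_congr rfl fun e _ => ?_
  rw [configLaw, PMF.ofFintype_apply, ENNReal.toReal_ofReal (configMass_nonneg κ b β e)]

end Law

section Labels

variable {n : ℕ}

/-- The number of nodes in group 1. -/
def labelCount (l : Fin n → Bool) : ℕ := #{i | l i = true}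

lemma labelCount_le (l : Fin n → Bool) : labelCount l ≤ n :=
  (card_filter_le _ _).trans_eq (by simp)

/-- The proportion of nodes in group 1 (equal to `0` when there is no node). -/
def labelFraction (l : Fin n → Bool) : I :=
  ⟨labelCount l / n, by positivity,
    div_le_one_of_le₀ (Nat.cast_le.2 (labelCount_le l)) (Nat.cast_nonneg n)⟩

lemma labelMass_eq_pow_mul_pow (κ : ℝ) (l : Fin n → Bool) :
    labelMass κ l = κ ^ labelCount l * (1 - κ) ^ (n - labelCount l) := by
  have hcompl := card_filter_add_card_filter_not (s := (univ : Finset (Fin n))) (l · = true)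
  rw [card_univ, Fintype.card_fin] at hcompl
  rw [labelMass, prod_ite, prod_const, prod_const, ← Nat.sub_eq_of_eq_add' hcompl.symm]
  rfl

lemma sum_comp_labelCount {M : Type*} [AddCommMonoid M] (f : ℕ → M) :
    ∑ l : Fin n → Bool, f (labelCount l) = ∑ j ∈ range (n + 1), n.choose j • f j := by
  have hcard := sum_powerset_apply_card f (x := (univ : Finset (Fin n)))
  rw [powerset_univ, card_univ, Fintype.card_fin] at hcard
  rw [← hcard]
  exact sum_nbij' (fun l => ({i | l i = true} : Finset (Fin n))) (fun s i => decide (i ∈ s))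
    (by simp) (by simp) (fun l _ => by simp) (fun s _ => by simp) fun l _ => rfl

variable {E : Type*} [NormedAddCommGroup E] [NormedSpace ℝ E]

lemma sum_labelMass_smul_labelFraction (κ : I) (F : C(I, E)) :
    ∑ l : Fin n → Bool, labelMass κ l • F (labelFraction l) = bernsteinApproximation n F κ := by
  have hfrac : ∀ l : Fin n → Bool, F (labelFraction l) =
      Set.IccExtend zero_le_one F (labelCount l / n : ℝ) := fun l =>
    (Set.IccExtend_of_mem _ _ (labelFraction l).2).symm
  have hz : ∀ j : Fin (n + 1), F (bernstein.z j) = Set.IccExtend zero_le_one F (j / n : ℝ) :=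
    fun j => (Set.IccExtend_of_mem _ _ (bernstein.z j).2).symm
  simp only [labelMass_eq_pow_mul_pow, hfrac, bernsteinApproximation.apply, bernstein_apply, hz,
    mul_assoc, mul_smul, Nat.cast_smul_eq_nsmul]
  simp only [← mul_smul]
  rw [sum_comp_labelCount fun j : ℕ =>
    ((κ : ℝ) ^ j * (1 - κ) ^ (n - j)) • Set.IccExtend zero_le_one F (j / n : ℝ), sum_range]

lemma tendsto_sum_labelMass_smul {κ : I} {F : ℕ → I → E} {G : C(I, E)}
    (hF : TendstoUniformly F G atTop) :
    Tendsto (fun n => ∑ l : Fin n → Bool, labelMass κ l • F n (labelFraction l)) atTop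
      (𝓝 (G κ)) := by
  have hG : Tendsto (fun n => ∑ l : Fin n → Bool, labelMass κ l • G (labelFraction l)) atTop
      (𝓝 (G κ)) := by
    simp only [sum_labelMass_smul_labelFraction]
    exact (ContinuousEvalConst.continuous_eval_const κ).tendsto G |>.comp
      (bernsteinApproximation_uniform G)
  refine hG.congr_dist (Metric.tendsto_atTop.2 fun ε hε => ?_)
  obtain ⟨N, hN⟩ := eventually_atTop.1 (Metric.tendstoUniformly_iff.1 hF (ε / 2) (half_pos hε))
  refine ⟨N, fun n hn => ?_⟩
  rw [Real.dist_0_eq_abs, abs_dist, dist_eq_norm, ← sum_sub_distrib]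
  calc ‖∑ l : Fin n → Bool, (labelMass κ l • G (labelFraction l)
        - labelMass κ l • F n (labelFraction l))‖
      ≤ ∑ l : Fin n → Bool, labelMass κ l * (ε / 2) := by
        refine norm_sum_le_of_le _ fun l _ => ?_
        rw [← smul_sub, norm_smul_of_nonneg (labelMass_nonneg κ l), ← dist_eq_norm]
        exact mul_le_mul_of_nonneg_left (hN n hn _).le (labelMass_nonneg κ l)
    _ = ε / 2 := by rw [← sum_mul, sum_labelMass, one_mul]
    _ < ε := half_lt_self hε

end Labels

section PairCounts

lemma sum_sum_eq_two_nsmul_sum_lt_add_sum_diag {ι M : Type*} [Fintype ι] [LinearOrder ι]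
    [AddCommMonoid M] {f : ι → ι → M} (hf : ∀ i j, f i j = f j i) :
    ∑ i, ∑ j, f i j = 2 • ∑ p : {p : ι × ι // p.1 < p.2}, f p.1.1 p.1.2 + ∑ i, f i i := by
  have hlt : ∑ p : {p : ι × ι // p.1 < p.2}, f p.1.1 p.1.2 =
      ∑ i, ∑ j, if i < j then f i j else 0 := by
    rw [← Fintype.sum_prod_type' fun i j => if i < j then f i j else 0, ← sum_filter]
    exact (sum_subtype _ (by simp) fun p : ι × ι => f p.1 p.2).symm
  have hgt : ∑ p : {p : ι × ι // p.1 < p.2}, f p.1.1 p.1.2 =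
      ∑ i, ∑ j, if j < i then f i j else 0 := by
    rw [hlt, sum_comm]
    simp only [hf]
  have hdiag : ∑ i, f i i = ∑ i, ∑ j, if i = j then f i j else 0 := by simp
  rw [two_nsmul]
  nth_rewrite 1 [hlt]
  rw [hgt, hdiag]
  simp only [← sum_add_distrib]
  refine sum_congr rfl fun i _ => sum_congr rfl fun j _ => ?_
  rcases lt_trichotomy i j with h | h | h
  · simp [h, h.not_gt, h.ne]
  · simp [h]
  · simp [h, h.not_gt, h.ne']

/-- The number of pairs in each block divided by `n ^ 2`, as a function of `h = 1 / n` and of the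
proportion `x` of nodes in group 1. -/
def pairDensity (h x : ℝ) : Fin 3 → ℝ :=
  ![x * (1 - x), x * (x - h) / 2, (1 - x) * (1 - x - h) / 2]

lemma pairDensity_zero_pos {x : ℝ} (h0 : 0 < x) (h1 : x < 1) (k : Fin 3) :
    0 < pairDensity 0 x k := by
  have := sub_pos.2 h1
  have hpos : 0 < x * (1 - x) ∧ 0 < x * (x - 0) / 2 ∧ 0 < (1 - x) * (1 - x - 0) / 2 := by
    rw [sub_zero, sub_zero]
    exact ⟨by positivity, by positivity, by positivity⟩
  fin_cases k
  exacts [hpos.1, hpos.2.1, hpos.2.2]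

lemma sum_pairBlock {n : ℕ} (hn : n ≠ 0) (l : Fin n → Bool) (θ : Fin 3 → ℂ) :
    ∑ p, θ (pairBlock l p) =
      ∑ k, (pairDensity (n : ℝ)⁻¹ (labelFraction l) k : ℂ) * ((n : ℂ) ^ 2 * θ k) := by
  let x : Fin n → ℂ := fun i => if l i then 1 else 0
  have hx : ∑ i, x i = labelCount l := by simp [x, labelCount]
  have hx' : ∑ i, (1 - x i) = n - labelCount l := by simp [sum_sub_distrib, hx]
  have hblock : ∀ i j, θ (labelBlock (l i) (l j)) = θ 0 * (x i * (1 - x j) + (1 - x i) * x j) +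
      (θ 1 * (x i * x j) + θ 2 * ((1 - x i) * (1 - x j))) := fun i j => by
    cases hi : l i <;> cases hj : l j <;> simp [x, labelBlock, hi, hj]
  have hdiag : ∀ i, θ (labelBlock (l i) (l i)) = θ 1 * x i + θ 2 * (1 - x i) := fun i => by
    cases hi : l i <;> simp [x, labelBlock, hi]
  generalize hS : ∑ p, θ (pairBlock l p) = S
  have hsum : ∑ i, ∑ j, θ (labelBlock (l i) (l j)) = 2 • S + ∑ i, θ (labelBlock (l i) (l i)) :=
    hS ▸ sum_sum_eq_two_nsmul_sum_lt_add_sum_diag fun i j => by cases l i <;> cases l j <;> rfl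
  simp only [hdiag] at hsum
  simp only [hblock, sum_add_distrib, ← mul_sum, ← sum_mul, hx, hx', nsmul_eq_mul] at hsum
  have hn' : (n : ℂ) ≠ 0 := Nat.cast_ne_zero.2 hn
  simp only [Fin.sum_univ_three, pairDensity, labelFraction, Matrix.cons_val_zero,
    Matrix.cons_val_one, Matrix.cons_val]
  push_cast at hsum ⊢
  field_simp
  linear_combination - hsum

end PairCounts

section CharFun

lemma continuous_pairDensity (k : Fin 3) :
    Continuous fun z : ℝ × ℝ => pairDensity z.1 z.2 k := by
  fin_cases k <;> dsimp [pairDensity] <;> fun_prop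

lemma continuous_cexp_sum_pairDensity :
    Continuous fun z : (ℝ × (Fin 3 → ℂ)) × I =>
      Complex.exp (∑ k, pairDensity z.1.1 z.2 k * z.1.2 k) := by
  refine Complex.continuous_exp.comp (continuous_finsetSum _ fun k _ => .mul ?_ (by fun_prop))
  exact Complex.continuous_ofReal.comp ((continuous_pairDensity k).comp
    (f := fun z : (ℝ × (Fin 3 → ℂ)) × I => (z.1.1, (z.2 : ℝ))) (by fun_prop))

lemma tendsto_integral_configLaw_prod {κ : I} {b β : ℕ → Fin 3 → I} {g : ℕ → Fin 3 → Dyad → ℂ}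
    {θ : Fin 3 → ℂ}
    (hg : ∀ k, Tendsto (fun n : ℕ => (n : ℂ) ^ 2 *
      (∑ w, dyadMass (b n k) (β n k) w * g n k w - 1)) atTop (𝓝 (θ k))) :
    Tendsto (fun n => ∫ e, ∏ p, g n (pairBlock e.1 p) (e.2 p)
        ∂(configLaw κ (b n) (β n) n).toMeasure) atTop
      (𝓝 (Complex.exp (∑ k, pairDensity 0 κ k * θ k))) := by
  set χ : ℕ → Fin 3 → ℂ := fun n k => ∑ w, dyadMass (b n k) (β n k) w * g n k w
  have hsq : Tendsto (fun n : ℕ => ‖(n : ℂ) ^ 2‖) atTop atTop := by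
    simp only [norm_pow, Complex.norm_natCast]
    exact (tendsto_pow_atTop two_ne_zero).comp tendsto_natCast_atTop_atTop
  have hne : ∀ᶠ n in atTop, ∀ k, χ n k ≠ 0 := eventually_all.2 fun k => by
    have hχ : Tendsto (fun n => χ n k) atTop (𝓝 1) :=
      tendsto_sub_nhds_zero_iff.1 (tendsto_zero_of_tendsto_mul hsq (hg k))
    exact hχ.eventually_ne one_ne_zero
  have hlog : Tendsto (fun (n : ℕ) k => (n : ℂ) ^ 2 * Complex.log (χ n k)) atTop (𝓝 θ) :=
    tendsto_pi_nhds.2 fun k => tendsto_mul_log_of_tendsto_mul_sub_one hsq (hg k)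
  have hunif : TendstoUniformly (fun (n : ℕ) (x : I) => Complex.exp
      (∑ k, pairDensity (n : ℝ)⁻¹ x k * ((n : ℂ) ^ 2 * Complex.log (χ n k))))
      (fun x => Complex.exp (∑ k, pairDensity 0 x k * θ k)) atTop := fun u hu =>
    (tendsto_inv_atTop_nhds_zero_nat.prodMk_nhds hlog).eventually
      (Continuous.tendstoUniformly (fun (z : ℝ × (Fin 3 → ℂ)) (x : I) =>
        Complex.exp (∑ k, pairDensity z.1 x k * z.2 k)) continuous_cexp_sum_pairDensity _ u hu)
  have hlim := tendsto_sum_labelMass_smul (κ := κ)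
    (G := ⟨_, continuous_cexp_sum_pairDensity.comp (.prodMk_right (0, θ))⟩) hunif
  refine hlim.congr' ?_
  filter_upwards [hne, eventually_ne_atTop 0] with n hn hn0
  rw [integral_configLaw_prod]
  refine sum_congr rfl fun l _ => ?_
  rw [← sum_pairBlock hn0 l fun k => Complex.log (χ n k), Complex.exp_sum]
  congr 1
  exact prod_congr rfl fun p _ => Complex.exp_log (hn _)

end CharFun

section Statistics

/-- The indicator of an observed edge in the first replicate. -/
def edgeInd (w : Dyad) : ℝ := if w.2.1 then 1 else 0

/-- The indicator of a disagreement between the two replicates. -/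
def disagreeInd (w : Dyad) : ℝ := if w.2.1 ≠ w.2.2 then 1 else 0

/-- The contribution of one dyad to the estimating equation of the error rate `β`; its sum over a
block vanishes when `β` is replaced by the estimate `β̂` of that block. -/
def errorScore (β : ℝ) (w : Dyad) : ℝ := disagreeInd w / 2 - β * edgeInd w

lemma sum_dyadMass_mul_edgeInd (b β : ℝ) : ∑ w, dyadMass b β w * edgeInd w = b * (1 - β) := by
  simp only [Fintype.sum_prod_type, Fintype.sum_bool, dyadMass, replicateMass, edgeInd, if_true,
    if_false, Bool.false_eq_true]
  ring

lemma sum_dyadMass_mul_errorScore (b β : ℝ) : ∑ w, dyadMass b β w * errorScore β w = 0 := by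
  simp only [Fintype.sum_prod_type, Fintype.sum_bool, dyadMass, replicateMass, errorScore,
    disagreeInd, edgeInd, if_true, if_false, Bool.false_eq_true, ne_eq, not_true, not_false_eq_true,
    Bool.true_eq_false]
  ring

lemma sum_dyadMass_mul_errorScore_sq (b β : ℝ) :
    ∑ w, dyadMass b β w * errorScore β w ^ 2 = b * β * (1 - β) / 2 := by
  simp only [Fintype.sum_prod_type, Fintype.sum_bool, dyadMass, replicateMass, errorScore,
    disagreeInd, edgeInd, if_true, if_false, Bool.false_eq_true, ne_eq, not_true, not_false_eq_true,
    Bool.true_eq_false]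
  ring

lemma continuous_dyadMass (w : Dyad) : Continuous fun z : ℝ × ℝ => dyadMass z.1 z.2 w := by
  unfold dyadMass replicateMass
  split_ifs <;> fun_prop

/-- The sum of `f` over the pairs of block `k`. -/
def blockSum {n : ℕ} (f : Dyad → ℝ) (k : Fin 3) (e : Config n) : ℝ :=
  ∑ p with pairBlock e.1 p = k, f (e.2 p)

lemma sum_blockSum {n : ℕ} (f : Fin 3 → Dyad → ℝ) (e : Config n) :
    ∑ k, blockSum (f k) k e = ∑ p, f (pairBlock e.1 p) (e.2 p) := by
  rw [← sum_fiberwise univ fun p => pairBlock e.1 p]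
  exact sum_congr rfl fun k _ => sum_congr rfl fun p hp => by rw [(mem_filter.1 hp).2]

/-- The block sums of the error scores and of the observed edges, normalised so as to have a
Gaussian and a constant limit respectively. -/
def normalizedSums {n : ℕ} (β : Fin 3 → I) (e : Config n) : Fin 3 ⊕ Fin 3 → ℝ :=
  Sum.elim (fun k => blockSum (errorScore (β k)) k e / n) fun k => blockSum edgeInd k e / n ^ 2

lemma sum_mul_normalizedSums {n : ℕ} (β : Fin 3 → I) (u : Fin 3 ⊕ Fin 3 → ℝ) (e : Config n) :
    ∑ i, u i * normalizedSums β e i =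
      ∑ p, (u (.inl (pairBlock e.1 p)) * errorScore (β (pairBlock e.1 p)) (e.2 p) / n +
        u (.inr (pairBlock e.1 p)) * edgeInd (e.2 p) / n ^ 2) := by
  rw [← sum_blockSum fun k w =>
    u (.inl k) * errorScore (β k) w / n + u (.inr k) * edgeInd w / n ^ 2]
  simp only [blockSum, sum_add_distrib, Fintype.sum_sum_type, normalizedSums, Sum.elim_inl,
    Sum.elim_inr, mul_div_assoc, ← mul_sum, ← sum_div]

/-- The limit means of `normalizedSums`. -/
def limitMean (κ : I) (q β : Fin 3 → I) : Fin 3 ⊕ Fin 3 → ℝ :=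
  Sum.elim 0 fun k => pairDensity 0 κ k * (q k * (1 - β k))

/-- The limit variances of `normalizedSums`. -/
def limitVar (κ : I) (q β : Fin 3 → I) : Fin 3 ⊕ Fin 3 → NNReal :=
  Sum.elim (fun k => (pairDensity 0 κ k * (q k * β k * (1 - β k) / 2)).toNNReal) 0

/-- The limit law of `normalizedSums`: the components are independent, and those that count observed
edges are constant. -/
abbrev limitLaw (κ : I) (q β : Fin 3 → I) : Measure (Fin 3 ⊕ Fin 3 → ℝ) :=
  Measure.pi fun i => gaussianReal (limitMean κ q β i) (limitVar κ q β i)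

lemma pairDensity_zero_nonneg (κ : I) (k : Fin 3) : 0 ≤ pairDensity 0 κ k := by
  have h0 := unitInterval.nonneg κ
  have h1 := unitInterval.one_minus_nonneg κ
  have h : 0 ≤ (κ : ℝ) * (1 - κ) ∧ 0 ≤ (κ : ℝ) * (κ - 0) / 2 ∧
      0 ≤ (1 - κ : ℝ) * (1 - κ - 0) / 2 := by
    rw [sub_zero, sub_zero]
    exact ⟨by positivity, by positivity, by positivity⟩
  fin_cases k
  exacts [h.1, h.2.1, h.2.2]

lemma coe_limitVar_inl (κ : I) (q β : Fin 3 → I) (k : Fin 3) :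
    (limitVar κ q β (.inl k) : ℝ) = pairDensity 0 κ k * (q k * β k * (1 - β k) / 2) := by
  have := unitInterval.one_minus_nonneg (β k)
  have := unitInterval.nonneg (β k)
  have := unitInterval.nonneg (q k)
  have := pairDensity_zero_nonneg κ k
  exact Real.coe_toNNReal _ (by positivity)

variable {κ : I} {b β : ℕ → Fin 3 → I} {q β₀ : Fin 3 → I}

lemma tendsto_sq_mul_sum_dyadMass_mul_cexp_sub_one {b β : ℕ → I} {q β₀ : I}
    (hb : Tendsto b atTop (𝓝 q)) (hβ : Tendsto β atTop (𝓝 β₀)) (u v : ℝ) :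
    Tendsto (fun n : ℕ => (n : ℂ) ^ 2 * (∑ w, dyadMass (b n) (β n) w *
      Complex.exp ((u * errorScore (β n) w / n + v * edgeInd w / n ^ 2 : ℝ) * Complex.I) - 1))
      atTop (𝓝 (v * (q * (1 - β₀)) * Complex.I - u ^ 2 * (q * β₀ * (1 - β₀) / 2) / 2)) := by
  have hbβ := ((continuous_subtype_val.tendsto _).comp hb).prodMk_nhds
    ((continuous_subtype_val.tendsto _).comp hβ)
  have hp : Tendsto (fun n => dyadMass (b n) (β n)) atTop (𝓝 (dyadMass q β₀)) :=
    tendsto_pi_nhds.2 fun w => ((continuous_dyadMass w).tendsto _).comp hbβ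
  have hs : Tendsto (fun n w => u * errorScore (β n) w) atTop
      (𝓝 fun w => u * errorScore β₀ w) := tendsto_pi_nhds.2 fun w =>
    ((tendsto_const_nhds.sub (hbβ.snd_nhds.mul_const _)).const_mul u)
  have hmean : ∀ n, ∑ w, dyadMass (b n) (β n) w * (u * errorScore (β n) w) = 0 := fun n => by
    simp only [mul_left_comm _ u, ← mul_sum, sum_dyadMass_mul_errorScore, mul_zero]
  convert tendsto_sq_mul_sum_mul_cexp_sub_one (fun w => v * edgeInd w)
    (fun n => sum_dyadMass (b n) (β n)) hmean hp hs using 2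
  have hedge := congrArg (fun x : ℝ => (x : ℂ)) (sum_dyadMass_mul_edgeInd q β₀)
  have hscore := congrArg (fun x : ℝ => (x : ℂ)) (sum_dyadMass_mul_errorScore_sq q β₀)
  push_cast at hedge hscore ⊢
  rw [← hedge, ← hscore]
  simp only [mul_sum, sum_mul, sum_div, ← sum_sub_distrib]
  exact sum_congr rfl fun w _ => by ring

lemma prod_charFun_gaussianReal_limit (κ : I) (q β : Fin 3 → I) (u : Fin 3 ⊕ Fin 3 → ℝ) :
    ∏ i, charFun (gaussianReal (limitMean κ q β i) (limitVar κ q β i)) (u i) =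
      Complex.exp (∑ k, pairDensity 0 κ k * (u (.inr k) * (q k * (1 - β k)) * Complex.I -
        u (.inl k) ^ 2 * (q k * β k * (1 - β k) / 2) / 2)) := by
  simp only [charFun_gaussianReal, ← Complex.exp_sum, Fintype.sum_sum_type, ← sum_add_distrib]
  congr 1
  refine sum_congr rfl fun k _ => ?_
  have hvar := congrArg (fun x : ℝ => (x : ℂ)) (coe_limitVar_inl κ q β k)
  simp only [limitMean, limitVar, Sum.elim_inl, Sum.elim_inr, Pi.zero_apply] at hvar ⊢
  rw [hvar]
  push_cast
  ring

theorem tendstoInDistribution_normalizedSums (hb : Tendsto b atTop (𝓝 q))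
    (hβ : Tendsto β atTop (𝓝 β₀)) :
    TendstoInDistribution (fun n (e : Config n) => normalizedSums (β n) e) atTop id
      (fun n => (configLaw κ (b n) (β n) n).toMeasure)
      (limitLaw κ q β₀) := by
  refine tendstoInDistribution_id_pi_of_tendsto_charFun
    (fun n => (measurable_of_finite _).aemeasurable) fun u => ?_
  rw [prod_charFun_gaussianReal_limit]
  refine (tendsto_integral_configLaw_prod fun k => tendsto_sq_mul_sum_dyadMass_mul_cexp_sub_one
    (tendsto_pi_nhds.1 hb k) (tendsto_pi_nhds.1 hβ k) (u (.inl k)) (u (.inr k))).congr fun n => ?_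
  refine integral_congr_ae (ae_of_all _ fun e => ?_)
  dsimp only
  rw [sum_mul_normalizedSums, Complex.ofReal_sum, sum_mul, Complex.exp_sum]

end Statistics

section Ratios

variable {ι α Ω' : Type*} {l : Filter ι} {Ω : ι → Type*} [∀ n, MeasurableSpace (Ω n)]
  {μ : ∀ n, Measure (Ω n)} [∀ n, IsProbabilityMeasure (μ n)] [MeasurableSpace Ω']
  {μ' : Measure Ω'} [IsProbabilityMeasure μ'] {X : ∀ n, Ω n → α ⊕ α → ℝ} {Z : Ω' → α ⊕ α → ℝ}
  {m : α → ℝ}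

lemma tendsto_measureReal_exists_inr_le_half [Finite α] (h : TendstoInDistribution X l Z μ μ')
    (hm : ∀ k, 0 < m k) (hZ : ∀ᵐ ω ∂μ', ∀ k, Z ω (.inr k) = m k) :
    Tendsto (fun n => (μ n).real {ω | ∃ k, X n ω (.inr k) ≤ m k / 2}) l (𝓝 0) := by
  set s : Set (α ⊕ α → ℝ) := {x | ∃ k, x (.inr k) ≤ m k / 2} with hs
  have hclosed : IsClosed s := by
    simp only [hs, Set.ofPred_exists]
    exact isClosed_iUnion_of_finite fun k => isClosed_le (by fun_prop) (by fun_prop)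
  have hnull : μ' (Z ⁻¹' s) = 0 := measure_eq_zero_iff_ae_notMem.2 <| hZ.mono
    fun ω hω ⟨k, hk⟩ => (half_lt_self (hm k)).not_ge (hω k ▸ hk)
  have hfr : μ'.map Z (frontier s) = 0 := measure_mono_null hclosed.frontier_subset <| by
    rwa [Measure.map_apply_of_aemeasurable h.aemeasurable_limit hclosed.measurableSet]
  have hlim := tendsto_measureReal_preimage_of_tendstoInDistribution h hclosed.measurableSet hfr
  rwa [measureReal_def (s := Z ⁻¹' s), hnull] at hlim

lemma tendstoInDistribution_sum_mul_div [Fintype α] {Y : ∀ n, Ω n → ℝ}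
    (h : TendstoInDistribution X l Z μ μ') (hm : ∀ k, 0 < m k)
    (hZ : ∀ᵐ ω ∂μ', ∀ k, Z ω (.inr k) = m k) (a : α → ℝ)
    (hY : ∀ n, AEMeasurable (Y n) (μ n)) (hXY : ∀ n ω, (∀ k, 0 < X n ω (.inr k)) →
      Y n ω = ∑ k, a k * (X n ω (.inl k) / X n ω (.inr k))) :
    TendstoInDistribution Y l (fun ω => ∑ k, a k / m k * Z ω (.inl k)) μ μ' := by
  -- The denominators are truncated to make the ratio a continuous function.
  set φ : (α ⊕ α → ℝ) → ℝ := fun x => ∑ k, a k * (x (.inl k) / max (x (.inr k)) (m k / 2))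
  have hφ : Continuous φ := by
    refine continuous_finsetSum _ fun k _ => continuous_const.mul ?_
    refine .div (by fun_prop) (by fun_prop) fun x => ?_
    exact (lt_max_of_lt_right (half_pos (hm k))).ne'
  have hφZ : φ ∘ Z =ᵐ[μ'] fun ω => ∑ k, a k / m k * Z ω (.inl k) := by
    filter_upwards [hZ] with ω hω
    refine sum_congr rfl fun k _ => ?_
    rw [hω, max_eq_left (half_le_self (hm k).le), div_mul_eq_mul_div, mul_div_assoc]
  have hφX : TendstoInDistribution (fun n => φ ∘ X n) l
      (fun ω => ∑ k, a k / m k * Z ω (.inl k)) μ μ' := by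
    have hcomp := h.continuous_comp hφ
    refine ⟨hcomp.forall_aemeasurable, hcomp.aemeasurable_limit.congr hφZ, ?_⟩
    simpa only [Measure.map_congr hφZ] using hcomp.tendsto
  refine tendstoInDistribution_of_tendsto_measureReal_ne hφX hY
    (squeeze_zero (fun n => measureReal_nonneg) (fun n => measureReal_mono fun ω hω => ?_)
      (tendsto_measureReal_exists_inr_le_half h hm hZ))
  by_contra! hlt
  have hpos : ∀ k, m k / 2 < X n ω (.inr k) := fun k => not_le.1 fun hk => hlt ⟨k, hk⟩
  refine hω ((sum_congr rfl fun k _ => ?_).trans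
    (hXY n ω fun k => (half_pos (hm k)).trans (hpos k)).symm)
  rw [max_eq_left (hpos k).le]

end Ratios

section ErrorRates

/-- The estimate `β̂` of the error rate in block `k`, as a function of the configuration. -/
def errorRate {n : ℕ} (k : Fin 3) (e : Config n) : ℝ :=
  blockSum disagreeInd k e / (2 * blockSum edgeInd k e)

lemma mul_errorRate_sub {n : ℕ} {β : Fin 3 → I} {k : Fin 3} {e : Config n}
    (h : 0 < normalizedSums β e (.inr k)) :
    n * (errorRate k e - β k) = normalizedSums β e (.inl k) / normalizedSums β e (.inr k) := by
  simp only [normalizedSums, Sum.elim_inl, Sum.elim_inr] at h ⊢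
  have hedge : blockSum edgeInd k e ≠ 0 := by
    rintro h0
    simp [h0] at h
  have hn : (n : ℝ) ≠ 0 := by
    rintro h0
    simp [h0] at h
  have hscore : blockSum (errorScore (β k)) k e =
      blockSum disagreeInd k e / 2 - β k * blockSum edgeInd k e := by
    simp only [blockSum, errorScore, sum_sub_distrib, sum_div, mul_sum]
  rw [hscore, errorRate]
  field_simp

/-- The limit variances of the normalised error rate estimates. -/
def errorVar (κ : I) (q β : Fin 3 → I) (k : Fin 3) : ℝ :=
  β k / (2 * q k * (1 - β k) * pairDensity 0 κ k)

variable {κ : I} {b β : ℕ → Fin 3 → I} {q β₀ : Fin 3 → I}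

lemma map_sum_mul_limitLaw (hκ : 0 < κ) (hκ' : κ < 1) (hq : ∀ k, 0 < q k)
    (hβ₀ : ∀ k, β₀ k < 1) (a : Fin 3 → ℝ) :
    (limitLaw κ q β₀).map (fun z => ∑ k, a k / limitMean κ q β₀ (.inr k) * z (.inl k)) =
      gaussianReal 0 (∑ k, a k ^ 2 * errorVar κ q β₀ k).toNNReal := by
  set m : Fin 3 → ℝ := fun k => limitMean κ q β₀ (.inr k) with hm
  have hvar : ∀ k, (a k / m k) ^ 2 * limitVar κ q β₀ (.inl k) = a k ^ 2 * errorVar κ q β₀ k := by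
    intro k
    have hρ := (pairDensity_zero_pos hκ hκ' k).ne'
    have hq' : (0 : ℝ) < q k := hq k
    have hβ' : (β₀ k : ℝ) < 1 := hβ₀ k
    have hβ'' := (sub_pos.2 hβ').ne'
    rw [coe_limitVar_inl, errorVar]
    simp only [hm, limitMean, Sum.elim_inr]
    field_simp
  have hmap := map_sum_mul_pi_gaussianReal (Sum.elim (fun k => a k / m k) 0) (limitMean κ q β₀)
    (limitVar κ q β₀)
  simp only [Fintype.sum_sum_type, Sum.elim_inl, Sum.elim_inr, Pi.zero_apply, zero_mul,
    sum_const_zero, add_zero] at hmap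
  rw [hmap]
  congr 1
  · simp [limitMean]
  · rw [← Real.toNNReal_coe (r := ∑ _, _)]
    simp [limitVar, ← hvar]

lemma ae_limitLaw_inr_eq (κ : I) (q β : Fin 3 → I) :
    ∀ᵐ z ∂limitLaw κ q β, ∀ k, z (.inr k) = limitMean κ q β (.inr k) := by
  refine ae_all_iff.2 fun k => Measure.tendsto_eval_ae_ae.eventually
    (p := fun x => x = limitMean κ q β (.inr k)) ?_
  simp [limitVar]

theorem tendstoInDistribution_sum_mul_errorRate_sub (hκ : 0 < κ) (hκ' : κ < 1)
    (hq : ∀ k, 0 < q k) (hβ₀ : ∀ k, β₀ k < 1) (hb : Tendsto b atTop (𝓝 q))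
    (hβ : Tendsto β atTop (𝓝 β₀)) (a : Fin 3 → ℝ) :
    TendstoInDistribution (fun n (e : Config n) => ∑ k, a k * (n * (errorRate k e - β n k))) atTop
      (fun z => ∑ k, a k / limitMean κ q β₀ (.inr k) * z (.inl k))
      (fun n => (configLaw κ (b n) (β n) n).toMeasure) (limitLaw κ q β₀) := by
  have hm : ∀ k, 0 < limitMean κ q β₀ (.inr k) := fun k =>
    mul_pos (pairDensity_zero_pos hκ hκ' k) (mul_pos (hq k) (sub_pos.2 (hβ₀ k)))
  exact tendstoInDistribution_sum_mul_div (tendstoInDistribution_normalizedSums hb hβ) hm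
    (ae_limitLaw_inr_eq _ _ _) a (fun n => (measurable_of_finite _).aemeasurable) fun n e he =>
      sum_congr rfl fun k _ => congrArg (a k * ·) (mul_errorRate_sub (he k))

theorem tendsto_measureReal_sum_mul_errorRate_sub_le (hκ : 0 < κ) (hκ' : κ < 1)
    (hq : ∀ k, 0 < q k) (hβ₀ : ∀ k, β₀ k < 1) (hb : Tendsto b atTop (𝓝 q))
    (hβ : Tendsto β atTop (𝓝 β₀)) {a : Fin 3 → ℝ} (ha : 0 < ∑ k, a k ^ 2 * errorVar κ q β₀ k)
    (x : ℝ) :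
    Tendsto (fun n => (configLaw κ (b n) (β n) n).toMeasure.real
        {e | ∑ k, a k * (n * (errorRate k e - β n k)) ≤ x}) atTop
      (𝓝 ((gaussianReal 0 (∑ k, a k ^ 2 * errorVar κ q β₀ k).toNNReal).real (Set.Iic x))) := by
  have hdist := tendstoInDistribution_sum_mul_errorRate_sub hκ hκ' hq hβ₀ hb hβ a
  have hatom := nullSingletonClass_gaussianReal (μ := 0) (Real.toNNReal_pos.2 ha).ne'
  have hlim := tendsto_measureReal_preimage_of_tendstoInDistribution hdist
    (measurableSet_Iic (a := x))
    (by rw [map_sum_mul_limitLaw hκ hκ' hq hβ₀, frontier_Iic, measure_singleton])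
  rwa [← map_measureReal_apply (by fun_prop) measurableSet_Iic,
    map_sum_mul_limitLaw hκ hκ' hq hβ₀] at hlim

end ErrorRates

section Disagreement

variable {κ : I} {b β : ℕ → Fin 3 → I} {q β₀ : Fin 3 → I}

lemma errorVar_pos (hκ : 0 < κ) (hκ' : κ < 1) {k : Fin 3} (hq : 0 < q k) (hβ : 0 < β₀ k)
    (hβ' : β₀ k < 1) : 0 < errorVar κ q β₀ k := by
  have h1 : (0 : ℝ) < q k := hq
  have h2 : (0 : ℝ) < β₀ k := hβ
  have h3 : (0 : ℝ) < 1 - β₀ k := sub_pos.2 hβ'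
  have h4 := pairDensity_zero_pos hκ hκ' k
  unfold errorVar
  positivity

/-- The configurations in which the two replicates differ: the event `Y ≠ Y'`. -/
def disagreement (n : ℕ) : Set (Config n) := {e | ∃ p, (e.2 p).2.1 ≠ (e.2 p).2.2}

lemma errorRate_eq_zero_of_notMem_disagreement {n : ℕ} {e : Config n} (he : e ∉ disagreement n)
    (k : Fin 3) : errorRate k e = 0 := by
  have heq : ∀ p, (e.2 p).2.1 = (e.2 p).2.2 := by simpa [disagreement] using he
  simp [errorRate, blockSum, disagreeInd, heq]

-- Identical replicates force `β̂ = 0`, so that the tight variable `n (β̂ - β)` equals `-n β`.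
lemma tendsto_measureReal_compl_disagreement (hκ : 0 < κ) (hκ' : κ < 1) (hq : ∀ k, 0 < q k)
    (hβ₀ : ∀ k, 0 < β₀ k) (hβ₀' : ∀ k, β₀ k < 1) (hb : Tendsto b atTop (𝓝 q))
    (hβ : Tendsto β atTop (𝓝 β₀)) :
    Tendsto (fun n => (configLaw κ (b n) (β n) n).toMeasure.real (disagreement n)ᶜ) atTop
      (𝓝 0) := by
  set a : Fin 3 → ℝ := Pi.single 0 1
  have ha : 0 < ∑ k, a k ^ 2 * errorVar κ q β₀ k := by
    simpa [a, Fin.sum_univ_three] using errorVar_pos hκ hκ' (hq 0) (hβ₀ 0) (hβ₀' 0)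
  have hbot : Tendsto (fun n : ℕ => (n : ℝ) * -(β n 0 : ℝ)) atTop atBot := by
    have hβ0 : Tendsto (fun n => -(β n 0 : ℝ)) atTop (𝓝 (-(β₀ 0 : ℝ))) :=
      ((continuous_subtype_val.tendsto _).comp (tendsto_pi_nhds.1 hβ 0)).neg
    exact tendsto_natCast_atTop_atTop.atTop_mul_neg (neg_lt_zero.2 (hβ₀ 0)) hβ0
  have hle : ∀ x : ℝ, ∀ᶠ n in atTop,
      (configLaw κ (b n) (β n) n).toMeasure.real (disagreement n)ᶜ ≤
        (configLaw κ (b n) (β n) n).toMeasure.real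
          {e | ∑ k, a k * (n * (errorRate k e - β n k)) ≤ x} := fun x => by
    filter_upwards [hbot.eventually_le_atBot x] with n hn
    refine measureReal_mono fun e he => ?_
    simpa [a, Fin.sum_univ_three, errorRate_eq_zero_of_notMem_disagreement he] using hn
  refine tendsto_order.2 ⟨fun c hc => .of_forall fun n => hc.trans_le measureReal_nonneg,
    fun ε hε => ?_⟩
  obtain ⟨x, hx⟩ := ((tendsto_cdf_atBot (gaussianReal 0
    (∑ k, a k ^ 2 * errorVar κ q β₀ k).toNNReal)).eventually_lt_const hε).exists
  rw [cdf_eq_real] at hx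
  filter_upwards [hle x, (tendsto_measureReal_sum_mul_errorRate_sub_le hκ hκ' hq hβ₀' hb hβ ha
    x).eventually_lt_const hx] with n h1 h2
  exact h1.trans_lt h2

theorem tendsto_cond_disagreement_sum_mul_errorRate_sub_le (hκ : 0 < κ) (hκ' : κ < 1)
    (hq : ∀ k, 0 < q k) (hβ₀ : ∀ k, 0 < β₀ k) (hβ₀' : ∀ k, β₀ k < 1)
    (hb : Tendsto b atTop (𝓝 q)) (hβ : Tendsto β atTop (𝓝 β₀)) {a : Fin 3 → ℝ} (ha : a ≠ 0)
    (x : ℝ) :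
    Tendsto (fun n => (cond (configLaw κ (b n) (β n) n).toMeasure (disagreement n)).real
        {e | ∑ k, a k * (n * (errorRate k e - β n k)) ≤ x}) atTop
      (𝓝 ((gaussianReal 0 (∑ k, a k ^ 2 * errorVar κ q β₀ k).toNNReal).real (Set.Iic x))) := by
  have hvar : ∀ k, 0 < errorVar κ q β₀ k := fun k =>
    errorVar_pos hκ hκ' (hq k) (hβ₀ k) (hβ₀' k)
  obtain ⟨j, hj⟩ := Function.ne_iff.1 ha
  have hpos : 0 < ∑ k, a k ^ 2 * errorVar κ q β₀ k :=
    sum_pos' (fun k _ => mul_nonneg (sq_nonneg _) (hvar k).le)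
      ⟨j, mem_univ j, mul_pos (sq_pos_of_ne_zero hj) (hvar j)⟩
  exact tendsto_cond_of_tendsto_measureReal_compl (fun n => (Set.toFinite _).measurableSet)
    (tendsto_measureReal_compl_disagreement hκ hκ' hq hβ₀ hβ₀' hb hβ)
    (tendsto_measureReal_sum_mul_errorRate_sub_le hκ hκ' hq hβ₀' hb hβ hpos x)

end Disagreement

section Pushforward

variable {Ω α : Type*} [MeasurableSpace Ω] [MeasurableSpace α] {μ : Measure Ω} {f : Ω → α}

lemma nullMeasurableSet_of_measure_add_measure_compl_le [IsFiniteMeasure μ] {s : Set Ω}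
    (h : μ s + μ sᶜ ≤ μ Set.univ) : NullMeasurableSet s μ := by
  set t := toMeasurable μ s
  set u := toMeasurable μ sᶜ
  have hu : MeasurableSet u := measurableSet_toMeasurable _ _
  have htu : t ∪ u = Set.univ := Set.univ_subset_iff.1 <| (Set.union_compl_self s).ge.trans <|
    Set.union_subset_union (subset_toMeasurable _ _) (subset_toMeasurable _ _)
  have hinter : μ (t ∩ u) = 0 := by
    have hadd := measure_union_add_inter (μ := μ) t hu
    rw [htu, measure_toMeasurable, measure_toMeasurable] at hadd
    have hle : μ Set.univ + μ (t ∩ u) ≤ μ Set.univ + 0 := by rwa [hadd, add_zero]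
    exact nonpos_iff_eq_zero.1 (ENNReal.le_of_add_le_add_left (measure_ne_top _ _) hle)
  have hst : μ (t \ s) = 0 := measure_mono_null
    (Set.inter_subset_inter_right t (subset_toMeasurable μ sᶜ)) hinter
  exact (measurableSet_toMeasurable μ s).nullMeasurableSet.congr
    ((subset_toMeasurable μ s).eventuallyLE.antisymm (ae_le_set.2 hst)).symm

lemma cond_map_of_aemeasurable (hf : AEMeasurable f μ) {s : Set α} (hs : MeasurableSet s) :
    ProbabilityTheory.cond (μ.map f) s = (ProbabilityTheory.cond μ (f ⁻¹' s)).map f := by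
  simp only [ProbabilityTheory.cond, Measure.restrict_map_of_aemeasurable hf hs,
    Measure.map_apply_of_aemeasurable hf hs, Measure.map_smul]

variable [Countable α] [MeasurableSingletonClass α]

lemma aemeasurable_of_tsum_measure_preimage_singleton_le [IsFiniteMeasure μ]
    (h : ∑' a, μ (f ⁻¹' {a}) ≤ μ Set.univ) : AEMeasurable f μ := by
  have hle : ∀ s : Set α, μ (f ⁻¹' s) ≤ ∑' a : s, μ (f ⁻¹' {a.1}) := fun s => by
    rw [← Set.biUnion_preimage_singleton f s]
    exact measure_biUnion_le μ s.to_countable _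
  refine NullMeasurable.aemeasurable fun s _ =>
    nullMeasurableSet_of_measure_add_measure_compl_le (le_trans ?_ h)
  exact (add_le_add (hle s) (hle sᶜ)).trans_eq
    (ENNReal.summable.tsum_add_tsum_compl (f := fun a => μ (f ⁻¹' {a})) ENNReal.summable)

lemma aemeasurable_of_measure_preimage_singleton_eq [IsProbabilityMeasure μ] {p : PMF α}
    (h : ∀ a, μ (f ⁻¹' {a}) = p a) : AEMeasurable f μ :=
  aemeasurable_of_tsum_measure_preimage_singleton_le <| by
    simp only [h, p.tsum_coe, measure_univ, le_refl]

lemma map_eq_toMeasure_of_measure_preimage_singleton_eq [IsProbabilityMeasure μ] {p : PMF α}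
    (h : ∀ a, μ (f ⁻¹' {a}) = p a) : μ.map f = p.toMeasure :=
  Measure.ext_of_singleton fun a => by
    rw [Measure.map_apply_of_aemeasurable (aemeasurable_of_measure_preimage_singleton_eq h)
      (measurableSet_singleton a), h, p.toMeasure_apply_singleton a (measurableSet_singleton a)]

end Pushforward

section Observation

variable {n : ℕ}

/-- The configuration formed by labels `c`, a network `a` and its noisy replicates `y`, `y'`. -/
def configOf (c : Fin n → Bool) (a y y' : Fin n → Fin n → Bool) : Config n :=
  (c, fun p => (a p.1.1 p.1.2, y p.1.1 p.1.2, y' p.1.1 p.1.2))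

/-- The loopless symmetric matrix with given entries above the diagonal. -/
def pairMatrix (f : Pair n → Bool) (i j : Fin n) : Bool :=
  if h : i < j then f ⟨(i, j), h⟩ else if h : j < i then f ⟨(j, i), h⟩ else false

lemma pairMatrix_symm (f : Pair n → Bool) (i j : Fin n) :
    pairMatrix f i j = pairMatrix f j i := by
  rcases lt_trichotomy i j with h | h | h <;> simp [pairMatrix, h, h.not_gt]

lemma pairMatrix_self (f : Pair n → Bool) (i : Fin n) : pairMatrix f i i = false := by
  simp [pairMatrix]

lemma pairMatrix_apply (f : Pair n → Bool) (p : Pair n) : pairMatrix f p.1.1 p.1.2 = f p := by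
  simp [pairMatrix, p.2]

lemma eq_pairMatrix_iff {m : Fin n → Fin n → Bool} (hs : ∀ i j, m i j = m j i)
    (hd : ∀ i, m i i = false) {f : Pair n → Bool} :
    m = pairMatrix f ↔ ∀ p : Pair n, m p.1.1 p.1.2 = f p := by
  refine ⟨fun h p => h ▸ pairMatrix_apply f p, fun h => funext₂ fun i j => ?_⟩
  rcases lt_trichotomy i j with hij | rfl | hij
  · rw [h ⟨(i, j), hij⟩, ← pairMatrix_apply f ⟨(i, j), hij⟩]
  · rw [hd, pairMatrix_self]
  · rw [hs, pairMatrix_symm, h ⟨(j, i), hij⟩, ← pairMatrix_apply f ⟨(j, i), hij⟩]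

lemma sbmB_eq_labelBlock (v : Fin 3 → ℝ) (x y : Bool) :
    sbmB (v 1) (v 2) (v 0) x y = v (labelBlock x y) := by
  cases x <;> cases y <;> rfl

@[to_additive]
lemma prod_filter_lt {M : Type*} [CommMonoid M] (f : Fin n × Fin n → M) :
    ∏ p with p.1 < p.2, f p = ∏ p : Pair n, f p.1 :=
  prod_subtype _ (by simp) f

lemma configMass_eq_mul (κ : I) (b β : Fin 3 → I) (e : Config n) :
    configMass κ b β e = labelMass κ e.1 *
      edgeMass (sbmB (b 1) (b 2) (b 0)) e.1 (pairMatrix fun p => (e.2 p).1) *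
      obsMass (sbmB (β 1) (β 2) (β 0)) e.1 (pairMatrix fun p => (e.2 p).1)
        (pairMatrix fun p => (e.2 p).2.1) *
      obsMass (sbmB (β 1) (β 2) (β 0)) e.1 (pairMatrix fun p => (e.2 p).1)
        (pairMatrix fun p => (e.2 p).2.2) := by
  simp only [edgeMass, obsMass, prod_filter_lt, pairMatrix_apply,
    sbmB_eq_labelBlock fun k => (b k : ℝ), sbmB_eq_labelBlock fun k => (β k : ℝ), mul_assoc,
    ← prod_mul_distrib]
  simp only [configMass, dyadMass, replicateMass, pairBlock, mul_assoc]

namespace IsObsSBM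

variable {Ω : Type*} [MeasurableSpace Ω] {P : Measure Ω} {B βm : Bool → Bool → ℝ} {κ : I}
  {b β : Fin 3 → I} {c : Ω → Fin n → Bool} {A Y Y' : Ω → Fin n → Fin n → Bool}

lemma configOf_eq_iff {κ : ℝ} (h : IsObsSBM P n B βm κ c A Y Y') (ω : Ω) (e : Config n) :
    configOf (c ω) (A ω) (Y ω) (Y' ω) = e ↔ c ω = e.1 ∧ A ω = pairMatrix (fun p => (e.2 p).1) ∧
      Y ω = pairMatrix (fun p => (e.2 p).2.1) ∧ Y' ω = pairMatrix fun p => (e.2 p).2.2 := by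
  simp only [eq_pairMatrix_iff (h.symmA ω) (h.looplessA ω),
    eq_pairMatrix_iff (h.symmY ω) (h.looplessY ω), eq_pairMatrix_iff (h.symmY' ω) (h.looplessY' ω),
    configOf, Prod.ext_iff, funext_iff, forall_and]

lemma configOf_mem_disagreement_iff {κ : ℝ} (h : IsObsSBM P n B βm κ c A Y Y') (ω : Ω) :
    configOf (c ω) (A ω) (Y ω) (Y' ω) ∈ disagreement n ↔ Y ω ≠ Y' ω := by
  have hY' := (eq_pairMatrix_iff (h.symmY' ω) (h.looplessY' ω)).2 fun p => rfl
  rw [hY', Ne, eq_pairMatrix_iff (h.symmY ω) (h.looplessY ω), not_forall]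
  simp only [disagreement, configOf, ← hY', Set.mem_ofPred_eq, ne_eq]

lemma measure_preimage_configOf
    (h : IsObsSBM P n (sbmB (b 1) (b 2) (b 0)) (sbmB (β 1) (β 2) (β 0)) κ c A Y Y')
    (e : Config n) :
    P ((fun ω => configOf (c ω) (A ω) (Y ω) (Y' ω)) ⁻¹' {e}) = configLaw κ b β n e := by
  have hlaw := h.law e.1 (pairMatrix fun p => (e.2 p).1) (pairMatrix fun p => (e.2 p).2.1)
    (pairMatrix fun p => (e.2 p).2.2) (pairMatrix_symm _) (pairMatrix_self _) (pairMatrix_symm _)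
    (pairMatrix_self _) (pairMatrix_symm _) (pairMatrix_self _)
  rw [← configMass_eq_mul] at hlaw
  rw [configLaw, PMF.ofFintype_apply, ← hlaw]
  exact congrArg P (Set.ext fun ω => h.configOf_eq_iff ω e)

lemma toReal_cond_ne_eq
    (h : IsObsSBM P n (sbmB (b 1) (b 2) (b 0)) (sbmB (β 1) (β 2) (β 0)) κ c A Y Y')
    (S : Set (Config n)) :
    ((cond P {ω | Y ω ≠ Y' ω}) {ω | configOf (c ω) (A ω) (Y ω) (Y' ω) ∈ S}).toReal =
      (cond (configLaw κ b β n).toMeasure (disagreement n)).real S := by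
  have _ := h.isProb
  have hf := aemeasurable_of_measure_preimage_singleton_eq h.measure_preimage_configOf
  rw [← map_eq_toMeasure_of_measure_preimage_singleton_eq h.measure_preimage_configOf,
    cond_map_of_aemeasurable hf (Set.toFinite _).measurableSet, measureReal_def,
    Measure.map_apply_of_aemeasurable (hf.mono_ac (cond_absolutelyContinuous))
      (Set.toFinite S).measurableSet]
  simp only [← h.configOf_mem_disagreement_iff]
  rfl

end IsObsSBM

section Estimators

variable {c : Fin n → Bool} {cls a y y' : Fin n → Fin n → Bool} {k : Fin 3}

lemma pairCard_and_eq_blockSum (hcls : ∀ i j, cls i j = true ↔ labelBlock (c i) (c j) = k)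
    {s : Fin n → Fin n → Bool} {f : Dyad → ℝ}
    (hf : ∀ i j, f (a i j, y i j, y' i j) = if s i j then 1 else 0) :
    pairCard (fun i j => cls i j && s i j) = blockSum f k (configOf c a y y') := by
  have hpair : ∀ p : Pair n, (if (cls p.1.1 p.1.2 && s p.1.1 p.1.2) = true then (1 : ℝ) else 0) =
      if pairBlock c p = k then f ((configOf c a y y').2 p) else 0 := fun p => by
    simp only [Bool.and_eq_true, hcls, configOf, hf, pairBlock, ite_and]
  rw [pairCard, blockSum, ← filter_filter, ← sum_boole, sum_filter_lt, sum_filter]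
  exact sum_congr rfl fun p _ => hpair p

lemma betaHat_eq_errorRate (hcls : ∀ i j, cls i j = true ↔ labelBlock (c i) (c j) = k) :
    betaHat cls y y' = errorRate k (configOf c a y y') := by
  have hedge := pairCard_and_eq_blockSum (a := a) (y := y) (y' := y') (s := y) (f := edgeInd) hcls
    fun i j => rfl
  have hdis := pairCard_and_eq_blockSum (a := a) (y := y) (y' := y')
    (s := fun i j => y i j != y' i j) (f := disagreeInd) hcls fun i j => by simp [disagreeInd]
  rw [betaHat, u1hat, u2hat, hedge, hdis, errorRate]
  rcases eq_or_ne (pairCard cls) 0 with h0 | h0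
  · have hdis0 : blockSum disagreeInd k (configOf c a y y') = 0 := by
      rw [pairCard, Nat.cast_eq_zero] at h0
      rw [← hdis, pairCard, Nat.cast_eq_zero]
      refine Nat.le_zero.1 ((card_le_card fun p => ?_).trans_eq h0)
      simp +contextual
    simp [h0, hdis0]
  · field_simp

lemma betaHat_between (c : Fin n → Bool) (a y y' : Fin n → Fin n → Bool) :
    betaHat (between c) y y' = errorRate 0 (configOf c a y y') :=
  betaHat_eq_errorRate fun i j => by
    unfold between labelBlock
    cases c i <;> cases c j <;> simp

lemma betaHat_within1 (c : Fin n → Bool) (a y y' : Fin n → Fin n → Bool) :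
    betaHat (within1 c) y y' = errorRate 1 (configOf c a y y') :=
  betaHat_eq_errorRate fun i j => by
    unfold within1 labelBlock
    cases c i <;> cases c j <;> simp

lemma betaHat_within2 (c : Fin n → Bool) (a y y' : Fin n → Fin n → Bool) :
    betaHat (within2 c) y y' = errorRate 2 (configOf c a y y') :=
  betaHat_eq_errorRate fun i j => by
    unfold within2 labelBlock
    cases c i <;> cases c j <;> simp

end Estimators

end Observation

section Contrasts

/-- The matrix taking the coefficients of `(n (β̂_b - β), √n (γ̂₁ - γ₁), √n (γ̂₂ - γ₂))` in a linear
combination to its coefficients in terms of the estimates `β̂` of the three blocks. -/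
def contrast : Matrix (Fin 3) (Fin 3) ℝ := !![1, 1, 1; 0, -1, 0; 0, 0, -1]

lemma contrast_mulVec_injective : Function.Injective contrast.mulVec :=
  Matrix.mulVec_injective_iff_isUnit.2 <| (Matrix.isUnit_iff_isUnit_det _).2 <| by
    simp [contrast, Matrix.det_fin_three]

/-- The covariance matrix of `contrastᵀ z` for independent coordinates `z` with variances `v`. -/
def contrastCov (v : Fin 3 → ℝ) : Matrix (Fin 3) (Fin 3) ℝ :=
  contrastᵀ * Matrix.diagonal v * contrast

lemma posDef_contrastCov {v : Fin 3 → ℝ} (hv : ∀ k, 0 < v k) : (contrastCov v).PosDef := by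
  rw [contrastCov, ← Matrix.conjTranspose_eq_transpose_of_trivial]
  exact (Matrix.PosDef.diagonal hv).conjTranspose_mul_mul_same contrast_mulVec_injective

lemma quadForm3_contrastCov (v t : Fin 3 → ℝ) :
    quadForm3 (contrastCov v) t = ∑ k, (contrast *ᵥ t) k ^ 2 * v k := by
  calc quadForm3 (contrastCov v) t = t ⬝ᵥ contrastCov v *ᵥ t := by
        simp only [quadForm3, dotProduct, Matrix.mulVec, mul_sum, mul_assoc]
    _ = (contrast *ᵥ t) ⬝ᵥ Matrix.diagonal v *ᵥ contrast *ᵥ t := by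
        rw [contrastCov, ← Matrix.mulVec_mulVec, ← Matrix.mulVec_mulVec, Matrix.dotProduct_mulVec,
          Matrix.vecMul_transpose]
    _ = ∑ k, (contrast *ᵥ t) k ^ 2 * v k := by
        simp only [dotProduct, Matrix.mulVec_diagonal]
        exact sum_congr rfl fun k _ => by ring

lemma sum_contrast_mulVec_mul_errorRate_sub {n : ℕ} (hn : n ≠ 0) {β γ₁ γ₂ : ℝ} {b : Fin 3 → ℝ}
    (hb : ∀ k, b k = β + ![0, -γ₁, -γ₂] k / √n) (c : Fin n → Bool) (a y y' : Fin n → Fin n → Bool)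
    (t : Fin 3 → ℝ) :
    t 0 * (n * (betaHat (between c) y y' - β)) + t 1 * (√n * (gammaHat1 c y y' - γ₁)) +
        t 2 * (√n * (gammaHat2 c y y' - γ₂)) =
      ∑ k, (contrast *ᵥ t) k * (n * (errorRate k (configOf c a y y') - b k)) := by
  have hs : √(n : ℝ) ≠ 0 := Real.sqrt_ne_zero'.2 (Nat.cast_pos.2 (Nat.pos_of_ne_zero hn))
  have hsq : (n : ℝ) = √n ^ 2 := (Real.sq_sqrt n.cast_nonneg).symm
  have ht : contrast *ᵥ t = ![t 0 + t 1 + t 2, -t 1, -t 2] := by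
    ext k
    fin_cases k <;> simp [contrast, Matrix.mulVec, dotProduct, Fin.sum_univ_three]
  simp only [gammaHat1, gammaHat2, betaHat_between c a,
    betaHat_within1 c a, betaHat_within2 c a, ht, hb, Fin.sum_univ_three, Matrix.cons_val]
  generalize √(n : ℝ) = s at *
  rw [hsq]
  field_simp
  ring

end Contrasts

section LocalParameters

/-- The parameters `x + δ k / √n` of the three blocks, truncated to be probabilities. -/
def localParam (x : I) (δ : Fin 3 → ℝ) (n : ℕ) (k : Fin 3) : I :=
  Set.projIcc 0 1 zero_le_one (x + δ k / √n)

lemma tendsto_add_div_sqrt (x y : ℝ) : Tendsto (fun n : ℕ => x + y / √n) atTop (𝓝 x) := by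
  simpa using ((Real.tendsto_sqrt_atTop.comp tendsto_natCast_atTop_atTop).const_div_atTop
    y).const_add x

lemma tendsto_localParam (x : I) (δ : Fin 3 → ℝ) :
    Tendsto (localParam x δ) atTop (𝓝 fun _ => x) := by
  refine tendsto_pi_nhds.2 fun k => ?_
  have hproj := (continuous_projIcc (h := zero_le_one (α := ℝ))).tendsto (x : ℝ)
  rw [Set.projIcc_val] at hproj
  exact hproj.comp (tendsto_add_div_sqrt _ _)

lemma eventually_coe_localParam {x : I} (h0 : 0 < x) (h1 : x < 1) (δ : Fin 3 → ℝ) :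
    ∀ᶠ n in atTop, ∀ k, (localParam x δ n k : ℝ) = x + δ k / √n :=
  eventually_all.2 fun k => by
    filter_upwards [(tendsto_add_div_sqrt x (δ k)).eventually (Icc_mem_nhds h0 h1)] with n hn
    exact congrArg Subtype.val (Set.projIcc_of_mem zero_le_one hn)

end LocalParameters

theorem statement_13
    (κ q β μ₁ μ₂ γ₁ γ₂ : ℝ)
    (hκ0 : 0 < κ) (hκ1 : κ < 1) (hq0 : 0 < q) (hq1 : q < 1)
    (hβ0 : 0 < β) (hβ1 : β < 1)
    (Ω : ℕ → Type) [mΩ : ∀ n, MeasurableSpace (Ω n)] (P : ∀ n, Measure (Ω n))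
    (c : ∀ n, Ω n → Fin n → Bool)
    (A Y Y' : ∀ n, Ω n → Fin n → Fin n → Bool)
    (hmodel : ∀ᶠ n : ℕ in atTop,
      IsObsSBM (P n) n
        (sbmB (q + μ₁ / Real.sqrt n) (q + μ₂ / Real.sqrt n) q)
        (sbmB (β - γ₁ / Real.sqrt n) (β - γ₂ / Real.sqrt n) β)
        κ (c n) (A n) (Y n) (Y' n)) :
    ∃ SigmaB : Matrix (Fin 3) (Fin 3) ℝ, SigmaB.PosDef ∧
      ∀ t : Fin 3 → ℝ, t ≠ 0 → ∀ x : ℝ,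
        Tendsto (fun n =>
            ((ProbabilityTheory.cond (P n) {ω | Y n ω ≠ Y' n ω})
              {ω | t 0 * ((n : ℝ) *
                    (betaHat (between (c n ω)) (Y n ω) (Y' n ω) - β))
                + t 1 * (Real.sqrt n *
                    (gammaHat1 (c n ω) (Y n ω) (Y' n ω) - γ₁))
                + t 2 * (Real.sqrt n *
                    (gammaHat2 (c n ω) (Y n ω) (Y' n ω) - γ₂)) ≤ x}).toReal)
          atTop
          (nhds ((gaussianReal 0 (Real.toNNReal (quadForm3 SigmaB t))
            (Set.Iic x)).toReal)) := by
  lift κ to I using ⟨hκ0.le, hκ1.le⟩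
  lift q to I using ⟨hq0.le, hq1.le⟩
  lift β to I using ⟨hβ0.le, hβ1.le⟩
  have hvar : ∀ k, 0 < errorVar κ (fun _ => q) (fun _ => β) k := fun k =>
    errorVar_pos hκ0 hκ1 hq0 hβ0 hβ1
  refine ⟨contrastCov (errorVar κ (fun _ => q) fun _ => β), posDef_contrastCov hvar,
    fun t ht x => ?_⟩
  have ha : contrast *ᵥ t ≠ 0 := fun h =>
    ht (contrast_mulVec_injective (h.trans (Matrix.mulVec_zero _).symm))
  rw [quadForm3_contrastCov]
  refine (tendsto_cond_disagreement_sum_mul_errorRate_sub_le hκ0 hκ1 (fun _ => hq0)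
    (fun _ => hβ0) (fun _ => hβ1) (tendsto_localParam q ![0, μ₁, μ₂])
    (tendsto_localParam β ![0, -γ₁, -γ₂]) ha x).congr' ?_
  filter_upwards [hmodel, eventually_coe_localParam hq0 hq1 ![0, μ₁, μ₂],
    eventually_coe_localParam hβ0 hβ1 ![0, -γ₁, -γ₂], eventually_ne_atTop 0] with n h hb hβ' hn
  rw [← IsObsSBM.toReal_cond_ne_eq (by simpa [hb, hβ', neg_div, ← sub_eq_add_neg] using h)]
  simp only [fun ω => sum_contrast_mulVec_mul_errorRate_sub hn hβ' (c n ω) (A n ω) (Y n ω)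
    (Y' n ω) t]
  rfl

end
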